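/- Proposition 3, converse direction (finite dimensions, PPT mixtures): let n ≥ 2, let M be a set of nonempty proper subsets of Fin n, and let ρ̃ = Σ_{m ∈ M} ρ̃_m, where each ρ̃_m is a positive semidefinite complex matrix with real entries on a finite nonempty type ι and Σ_{m ∈ M} tr ρ̃_m = 1. For each party s : Fin n let Ã^s : α_s → Matrix ι ι ℂ be a family of real symmetric idempotent matrices such that Ã^s(i)·Ã^{s'}(j) = Ã^{s'}(j)·Ã^s(i) whenever s ≠ s'. Assume that for each m ∈ M, all ordered products W of operators taken from parties in m and all ordered products V of operators taken from parties in the complement of m satisfy tr[ρ̃_m·W·V] = tr[ρ̃_m·Wʳ·V], where Wʳ denotes the same product taken in reversed order. Then there exist finite nonempty types ι_s, an n-partite quantum state ρ on (Π s, ι_s), a decomposition ρ = Σ_{m ∈ M} τ_m with every τ_m positive semidefinite and every τ_m^{T_m} positive semidefinite (i.e. ρ is a PPT mixture), and Hermitian idempotent matrices A^s : α_s → Matrix ι_s ι_s ℂ such that for every choice of indices (i_s)_{s}: tr[ρ·(⊗_s A^s(i_s))] = tr[ρ̃·Π_s Ã^s(i_s)]. -/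

import Mathlib

open Matrix
open scoped Kronecker ComplexOrder

/-- Partial transpose on the first tensor factor. -/
def ptA {ιA ιB : Type*} (ρ : Matrix (ιA × ιB) (ιA × ιB) ℂ) : Matrix (ιA × ιB) (ιA × ιB) ℂ :=
  fun p q => ρ (q.1, p.2) (p.1, q.2)

/-- Sum of the absolute values of the negative eigenvalues of a Hermitian matrix
(0 if the matrix is not Hermitian). -/
noncomputable def negEig {ι : Type*} [Fintype ι] [DecidableEq ι] (M : Matrix ι ι ℂ) : ℝ :=
  letI := Classical.dec M.IsHermitian
  if h : M.IsHermitian then ∑ i, max 0 (-(h.eigenvalues i)) else 0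

/-- Tensor product of one matrix per party. -/
def npTensor {n : ℕ} {ι : Fin n → Type*} (M : (s : Fin n) → Matrix (ι s) (ι s) ℂ) :
    Matrix ((s : Fin n) → ι s) ((s : Fin n) → ι s) ℂ :=
  fun i j => ∏ s, M s (i s) (j s)

/-- Partial transpose across the bipartition m: exchanges row and column index at
every coordinate s ∈ m. -/
def ptm {n : ℕ} {ι : Fin n → Type*} (m : Finset (Fin n))
    (ρ : Matrix ((s : Fin n) → ι s) ((s : Fin n) → ι s) ℂ) :
    Matrix ((s : Fin n) → ι s) ((s : Fin n) → ι s) ℂ :=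
  fun i j => ρ (fun s => if s ∈ m then j s else i s) (fun s => if s ∈ m then i s else j s)

/-- Ordered product of operators along a list of pairs (party, index). -/
noncomputable def wordProd {n : ℕ} {ι : Type*} [Fintype ι] [DecidableEq ι]
    {α : Fin n → Type*} (At : (s : Fin n) → α s → Matrix ι ι ℂ)
    (w : List (Σ s : Fin n, α s)) : Matrix ι ι ℂ :=
  (w.map (fun p => At p.1 p.2)).prod

open Polynomial Unitary in
theorem psd_of_alg {κ : Type*} [Fintype κ] [DecidableEq κ] (S : Subalgebra ℂ (Matrix κ κ ℂ))
    (τ : Matrix κ κ ℂ) (hτ : τ ∈ S) (h : τ.IsHermitian)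
    (hp : ∀ y ∈ S, 0 ≤ Matrix.trace (τ * (yᴴ * y))) : τ.PosSemidef := by
  rw [h.posSemidef_iff_eigenvalues_nonneg]
  intro i
  classical
  set ev : κ → ℂ := fun j => (h.eigenvalues j : ℂ) with hev
  let p : ℂ[X] := Lagrange.interpolate (Finset.univ.image ev) id (fun x => if x = ev i then 1 else 0)
  have hpe : ∀ j, p.eval (ev j) = if ev j = ev i then 1 else 0 := by
    intro j
    exact Lagrange.eval_interpolate_at_node (s := Finset.univ.image ev) (v := id) (fun x => if x = ev i then (1:ℂ) else 0) (Function.injective_id.injOn)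
      (i := ev j) (by simp)
  have hy : aeval τ p ∈ S := by
    exact Algebra.adjoin_le (by simpa using hτ) (aeval_mem_adjoin_singleton ℂ τ)
  have key := hp _ hy
  let f := conjStarAlgAut ℂ _ h.eigenvectorUnitary
  have hsp : τ = f (diagonal ev) := h.spectral_theorem
  have hd : aeval (diagonal ev) p = diagonal (fun j => p.eval (ev j)) := by
    have := aeval_algHom_apply (Matrix.diagonalAlgHom (n := κ) (α := ℂ) ℂ) ev p
    simp only [Matrix.diagonalAlgHom_apply] at this
    rw [this]
    congr 1
    ext j
    have := aeval_algHom_apply (Pi.evalAlgHom ℂ (fun _ : κ => ℂ) j) ev p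
    simp only [Pi.evalAlgHom_apply] at this
    rw [← this]
    simp [Polynomial.aeval_def, Polynomial.eval₂_eq_eval_map]
  have hy2 : aeval τ p = f (diagonal (fun j => if ev j = ev i then 1 else 0)) := by
    rw [hsp]
    have := aeval_algHom_apply (f.toAlgEquiv : Matrix κ κ ℂ →ₐ[ℂ] Matrix κ κ ℂ) (diagonal ev) p
    simp only [hpe] at hd
    rw [hd] at this
    exact this
  have htrf : ∀ x, Matrix.trace (f x) = Matrix.trace x := by
    intro x
    simp only [f, conjStarAlgAut_apply]
    rw [Matrix.trace_mul_comm, ← mul_assoc]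
    simp
  rw [hy2, ← star_eq_conjTranspose, ← map_star f, hsp, ← map_mul, ← map_mul, htrf, star_eq_conjTranspose,
    diagonal_conjTranspose, diagonal_mul_diagonal, diagonal_mul_diagonal, trace_diagonal] at key
  have hk : (∑ j, ev j * ((star fun j => if ev j = ev i then (1:ℂ) else 0) j * if ev j = ev i then 1 else 0))
     = ((Finset.univ.filter (fun j => ev j = ev i)).card : ℂ) * ev i := by
    rw [← nsmul_eq_mul, ← Finset.sum_const, Finset.sum_filter]
    refine Finset.sum_congr rfl fun j _ => ?_
    by_cases hj : ev j = ev i <;> simp [hj]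
  rw [hk] at key
  have hc : 0 < (Finset.univ.filter (fun j => ev j = ev i)).card := Finset.card_pos.2 ⟨i, by simp⟩
  have key' : (0:ℝ) ≤ (Finset.univ.filter (fun j => ev j = ev i)).card * h.eigenvalues i := by
    rw [← Complex.zero_le_real]
    push_cast
    exact key
  exact nonneg_of_mul_nonneg_right key' (Nat.cast_pos.2 hc)

theorem ofFn_prod_comm {R : Type*} [Monoid R] {n : ℕ} (x : R) (a : Fin n → R)
    (h : ∀ i, x * a i = a i * x) : x * (List.ofFn a).prod = (List.ofFn a).prod * x := by
  refine Commute.list_prod_right _ x ?_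
  intro y hy
  obtain ⟨i, rfl⟩ := (List.mem_ofFn).1 hy
  exact h i

theorem ofFn_prod_mul {R : Type*} [Monoid R] {n : ℕ} (a b : Fin n → R)
    (h : ∀ i j, i ≠ j → a i * b j = b j * a i) :
    (List.ofFn (fun s => a s * b s)).prod = (List.ofFn a).prod * (List.ofFn b).prod := by
  induction n with
  | zero => simp
  | succ n ih =>
    simp only [List.ofFn_succ, List.prod_cons]
    rw [ih _ _ (fun i j hij => h _ _ (by simpa using hij))]
    have := ofFn_prod_comm (b 0) (fun i : Fin n => a i.succ) (fun i => (h _ _ (Fin.succ_ne_zero i)).symm)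
    simp only [mul_assoc]
    congr 1
    simp only [← mul_assoc]
    rw [this]

theorem ofFn_prod_transpose {κ : Type*} [Fintype κ] [DecidableEq κ] {n : ℕ} (a : Fin n → Matrix κ κ ℂ)
    (h : ∀ i j, i ≠ j → a i * a j = a j * a i) :
    (List.ofFn a).prodᵀ = (List.ofFn (fun s => (a s)ᵀ)).prod := by
  induction n with
  | zero => simp
  | succ n ih =>
    simp only [List.ofFn_succ, List.prod_cons]
    rw [← ih _ (fun i j hij => h _ _ (by simpa using hij)), ← transpose_mul,
      ofFn_prod_comm (a 0) (fun i : Fin n => a i.succ) (fun i => (h _ _ (Fin.succ_ne_zero i).symm))]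

/-- Riesz representation inside a star-closed subspace of matrices. -/
theorem riesz_in_sub {κ : Type*} [Fintype κ] [DecidableEq κ] (S : Submodule ℂ (Matrix κ κ ℂ))
    (hstar : ∀ x ∈ S, xᴴ ∈ S) (φ : Matrix κ κ ℂ →ₗ[ℂ] ℂ) :
    ∃ τ ∈ S, ∀ y ∈ S, Matrix.trace (τ * y) = φ y := by
  let B : S →ₗ[ℂ] Module.Dual ℂ S :=
    LinearMap.mk₂ ℂ (fun x y : S => Matrix.trace ((x : Matrix κ κ ℂ) * (y : Matrix κ κ ℂ)))
      (by intros; simp [add_mul]) (by intros; simp) (by intros; simp [mul_add]) (by intros; simp)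
  have hinj : Function.Injective B := by
    rw [← LinearMap.ker_eq_bot, LinearMap.ker_eq_bot']
    intro x hx
    have := congrArg (fun g => g ⟨_, hstar _ x.2⟩) hx
    have h2 : Matrix.trace ((x : Matrix κ κ ℂ) * (x : Matrix κ κ ℂ)ᴴ) = 0 := this
    rw [Matrix.trace_mul_conjTranspose_self_eq_zero_iff] at h2
    exact Subtype.ext h2
  have hsurj : Function.Surjective B :=
    (LinearMap.injective_iff_surjective_of_finrank_eq_finrank Subspace.dual_finrank_eq.symm).1 hinj
  obtain ⟨τ, hτ⟩ := hsurj (φ ∘ₗ S.subtype)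
  exact ⟨τ, τ.2, fun y hy => congrArg (fun g => g ⟨y, hy⟩) hτ⟩

theorem uniq_in_sub {κ : Type*} [Fintype κ] [DecidableEq κ] (S : Submodule ℂ (Matrix κ κ ℂ))
    (hstar : ∀ x ∈ S, xᴴ ∈ S) (a b : Matrix κ κ ℂ) (ha : a ∈ S) (hb : b ∈ S)
    (h : ∀ y ∈ S, Matrix.trace (a * y) = Matrix.trace (b * y)) : a = b := by
  have := h _ (hstar _ (S.sub_mem ha hb))
  rw [← sub_eq_zero, ← Matrix.trace_sub, ← sub_mul, Matrix.trace_mul_conjTranspose_self_eq_zero_iff] at this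
  exact sub_eq_zero.1 this

theorem npTensor_mul {n : ℕ} {κ : Type*} [Fintype κ] [DecidableEq κ] (a b : Fin n → Matrix κ κ ℂ) :
    npTensor a * npTensor b = npTensor (fun s => a s * b s) := by
  ext i j
  simp only [npTensor, Matrix.mul_apply, ← Finset.prod_mul_distrib]
  rw [Finset.prod_univ_sum]
  simp

theorem npTensor_one {n : ℕ} {κ : Type*} [Fintype κ] [DecidableEq κ] :
    npTensor (fun _ : Fin n => (1 : Matrix κ κ ℂ)) = 1 := by
  ext i j
  simp only [npTensor, Matrix.one_apply, Finset.prod_ite_zero, Finset.prod_const_one, funext_iff,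
    Finset.mem_univ, true_implies]

theorem npTensor_star {n : ℕ} {κ : Type*} (a : Fin n → Matrix κ κ ℂ) :
    (npTensor a)ᴴ = npTensor (fun s => (a s)ᴴ) := by
  ext i j
  simp [npTensor, Matrix.conjTranspose_apply]

theorem ptm_npTensor {n : ℕ} {κ : Type*} (m : Finset (Fin n)) (a : Fin n → Matrix κ κ ℂ) :
    ptm m (npTensor a) = npTensor (fun s => if s ∈ m then (a s)ᵀ else a s) := by
  ext i j
  simp only [ptm, npTensor]
  refine Finset.prod_congr rfl fun s _ => ?_
  split_ifs <;> rfl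

/-- Partial transpose as a linear map. -/
def ptmL {n : ℕ} {κ : Type*} (m : Finset (Fin n)) :
    Matrix (Fin n → κ) (Fin n → κ) ℂ →ₗ[ℂ] Matrix (Fin n → κ) (Fin n → κ) ℂ where
  toFun := ptm m
  map_add' _ _ := rfl
  map_smul' _ _ := rfl

theorem trace_ptm_mul {n : ℕ} {κ : Type*} [Fintype κ] [DecidableEq κ] (m : Finset (Fin n))
    (a b : Matrix (Fin n → κ) (Fin n → κ) ℂ) :
    Matrix.trace (ptm m a * b) = Matrix.trace (a * ptm m b) := by
  simp only [Matrix.trace, Matrix.diag, Matrix.mul_apply, ptm]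
  rw [← Finset.sum_product', ← Finset.sum_product']
  let sw : ((Fin n → κ) × (Fin n → κ)) → ((Fin n → κ) × (Fin n → κ)) := fun p =>
    (fun s => if s ∈ m then p.2 s else p.1 s, fun s => if s ∈ m then p.1 s else p.2 s)
  have hsw : Function.Involutive sw := by
    intro p
    ext s <;> simp only [sw] <;> split_ifs <;> rfl
  refine Finset.sum_bij' (fun p _ => sw p) (fun p _ => sw p) (by simp) (by simp)
    (fun p _ => hsw p) (fun p _ => hsw p) ?_
  intro p _
  simp only [sw]
  congr 2 <;> ext s <;> split_ifs <;> rfl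

/-- Linear extension of the multilinear map `X ↦ ∏ P_s (X_s)` to the tensor product. -/
theorem exists_tensor_lift {n : ℕ} {κ ι : Type*} [Fintype κ] [DecidableEq κ] [Fintype ι] [DecidableEq ι]
    (P : Fin n → Matrix κ κ ℂ →ₗ[ℂ] Matrix ι ι ℂ) :
    ∃ Q : Matrix (Fin n → κ) (Fin n → κ) ℂ →ₗ[ℂ] Matrix ι ι ℂ,
      ∀ a : Fin n → Matrix κ κ ℂ, Q (npTensor a) = (List.ofFn (fun s => P s (a s))).prod := by
  let F : MultilinearMap ℂ (fun _ : Fin n => Matrix κ κ ℂ) (Matrix ι ι ℂ) :=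
    (MultilinearMap.mkPiAlgebraFin ℂ n (Matrix ι ι ℂ)).compLinearMap P
  let c : (Fin n → κ × κ) → Matrix ι ι ℂ := fun r => F (fun s => Matrix.single (r s).1 (r s).2 1)
  refine ⟨{ toFun := fun X => ∑ r : Fin n → κ × κ, X (fun s => (r s).1) (fun s => (r s).2) • c r
            map_add' := by intro x y; simp [add_smul, Finset.sum_add_distrib]
            map_smul' := by intro x y; simp [mul_smul, Finset.smul_sum] }, ?_⟩
  intro a
  have h1 : (List.ofFn (fun s => P s (a s))).prod = F a := by simp [F]
  have h2 : a = fun s => ∑ p : κ × κ, (a s p.1 p.2) • Matrix.single p.1 p.2 (1:ℂ) := by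
    ext1 s
    conv_lhs => rw [Matrix.matrix_eq_sum_single (a s)]
    rw [Fintype.sum_prod_type]
    simp [Matrix.smul_single]
  rw [h1]
  conv_rhs => rw [h2]
  rw [MultilinearMap.map_sum]
  simp only [LinearMap.coe_mk, AddHom.coe_mk]
  refine Finset.sum_congr rfl fun r _ => ?_
  rw [MultilinearMap.map_smul_univ]
  rfl

/-- Single-party word. -/
noncomputable def wrd {n : ℕ} {ι : Type*} [Fintype ι] [DecidableEq ι]
    {α : Fin n → Type*} (At : (s : Fin n) → α s → Matrix ι ι ℂ) (s : Fin n) (l : List (α s)) :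
    Matrix ι ι ℂ := (l.map (At s)).prod

theorem wrd_append {n : ℕ} {ι : Type*} [Fintype ι] [DecidableEq ι]
    {α : Fin n → Type*} (At : (s : Fin n) → α s → Matrix ι ι ℂ) (s : Fin n) (l l' : List (α s)) :
    wrd At s (l ++ l') = wrd At s l * wrd At s l' := by simp [wrd]

theorem wrd_transpose {n : ℕ} {ι : Type*} [Fintype ι] [DecidableEq ι]
    {α : Fin n → Type*} (At : (s : Fin n) → α s → Matrix ι ι ℂ)
    (hsym : ∀ s i, (At s i)ᵀ = At s i) (s : Fin n) (l : List (α s)) :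
    (wrd At s l)ᵀ = wrd At s l.reverse := by
  simp [wrd, Matrix.transpose_list_prod, Function.comp_def, hsym, List.map_reverse]

theorem wrd_star {n : ℕ} {ι : Type*} [Fintype ι] [DecidableEq ι]
    {α : Fin n → Type*} (At : (s : Fin n) → α s → Matrix ι ι ℂ)
    (hH : ∀ s i, (At s i)ᴴ = At s i) (s : Fin n) (l : List (α s)) :
    (wrd At s l)ᴴ = wrd At s l.reverse := by
  simp [wrd, Matrix.conjTranspose_list_prod, Function.comp_def, hH, List.map_reverse]

theorem wrd_comm {n : ℕ} {ι : Type*} [Fintype ι] [DecidableEq ι]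
    {α : Fin n → Type*} (At : (s : Fin n) → α s → Matrix ι ι ℂ)
    (hcomm : ∀ s s', s ≠ s' → ∀ i j, At s i * At s' j = At s' j * At s i)
    (s s' : Fin n) (h : s ≠ s') (l : List (α s)) (l' : List (α s')) :
    wrd At s l * wrd At s' l' = wrd At s' l' * wrd At s l := by
  refine Commute.list_prod_right _ _ fun y hy => Commute.list_prod_left _ _ fun x hx => ?_
  obtain ⟨j, _, rfl⟩ := List.mem_map.1 hy
  obtain ⟨i, _, rfl⟩ := List.mem_map.1 hx
  exact hcomm s s' h i j

theorem wordProd_transpose {n : ℕ} {ι : Type*} [Fintype ι] [DecidableEq ι]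
    {α : Fin n → Type*} (At : (s : Fin n) → α s → Matrix ι ι ℂ)
    (hsym : ∀ s i, (At s i)ᵀ = At s i) (w : List (Σ s : Fin n, α s)) :
    wordProd At w.reverse = (wordProd At w)ᵀ := by
  simp [wordProd, Matrix.transpose_list_prod, Function.comp_def, hsym, List.map_reverse]

theorem wordProd_flat {n : ℕ} {ι : Type*} [Fintype ι] [DecidableEq ι]
    {α : Fin n → Type*} (At : (s : Fin n) → α s → Matrix ι ι ℂ) (l : (s : Fin n) → List (α s)) :
    wordProd At (List.ofFn (fun s => (l s).map (fun i => (⟨s, i⟩ : Σ s : Fin n, α s)))).flatten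
      = (List.ofFn (fun s => wrd At s (l s))).prod := by
  simp [wordProd, wrd, List.map_flatten, List.prod_flatten, List.map_ofFn, Function.comp_def]

theorem ppt_words {n : ℕ} {ι : Type*} [Fintype ι] [DecidableEq ι]
    {α : Fin n → Type*} (m : Finset (Fin n)) (ρ : Matrix ι ι ℂ)
    (At : (s : Fin n) → α s → Matrix ι ι ℂ)
    (hsym : ∀ s i, (At s i)ᵀ = At s i)
    (hcomm : ∀ s s', s ≠ s' → ∀ i j, At s i * At s' j = At s' j * At s i)
    (hppt : ∀ (w v : List (Σ s : Fin n, α s)),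
      (∀ p ∈ w, p.1 ∈ m) → (∀ p ∈ v, p.1 ∉ m) →
      Matrix.trace (ρ * wordProd At w * wordProd At v) =
        Matrix.trace (ρ * wordProd At w.reverse * wordProd At v))
    (l : (s : Fin n) → List (α s)) :
    Matrix.trace (ρ * (List.ofFn (fun s => wrd At s (if s ∈ m then (l s).reverse else l s))).prod)
      = Matrix.trace (ρ * (List.ofFn (fun s => wrd At s (l s))).prod) := by
  let a : (s : Fin n) → List (α s) := fun s => if s ∈ m then l s else []
  let b : (s : Fin n) → List (α s) := fun s => if s ∈ m then [] else l s
  have h := hppt (List.ofFn (fun s => (a s).map (fun i => (⟨s, i⟩ : Σ s : Fin n, α s)))).flatten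
    (List.ofFn (fun s => (b s).map (fun i => (⟨s, i⟩ : Σ s : Fin n, α s)))).flatten ?_ ?_
  · rw [wordProd_transpose At hsym, wordProd_flat, wordProd_flat,
      ofFn_prod_transpose _ (fun i j hij => wrd_comm At hcomm i j hij _ _)] at h
    simp only [wrd_transpose At hsym] at h
    rw [mul_assoc, mul_assoc, ← ofFn_prod_mul _ _ (fun i j hij => wrd_comm At hcomm i j hij _ _),
      ← ofFn_prod_mul _ _ (fun i j hij => wrd_comm At hcomm i j hij _ _)] at h
    simp only [← wrd_append] at h
    have e1 : ∀ s, a s ++ b s = l s := by intro s; simp only [a, b]; split_ifs <;> simp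
    have e2 : ∀ s, (a s).reverse ++ b s = if s ∈ m then (l s).reverse else l s := by
      intro s; simp only [a, b]; split_ifs <;> simp
    simp only [e1, e2] at h
    exact h.symm
  · intro p hp
    simp only [List.mem_flatten, List.mem_ofFn] at hp
    obtain ⟨_, ⟨s, rfl⟩, hp⟩ := hp
    obtain ⟨i, hi, rfl⟩ := List.mem_map.1 hp
    by_contra hs
    simp [a] at hi
    exact hs hi.1
  · intro p hp hs
    simp only [List.mem_flatten, List.mem_ofFn] at hp
    obtain ⟨_, ⟨s, rfl⟩, hp⟩ := hp
    obtain ⟨i, hi, rfl⟩ := List.mem_map.1 hp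
    simp [b] at hi
    exact hi.1 hs

theorem herm_of_real {ι : Type*} (a : Matrix ι ι ℂ) (h : aᵀ = a) (hr : ∀ p q, (a p q).im = 0) :
    aᴴ = a := by
  conv_rhs => rw [← h]
  ext p q
  simp only [Matrix.conjTranspose_apply, Matrix.transpose_apply]
  exact Complex.conj_eq_iff_im.2 (hr q p)

theorem core {n : ℕ} {ι κ : Type*} [Fintype ι] [DecidableEq ι] [Fintype κ] [DecidableEq κ]
    (e : ι ≃ κ) {α : Fin n → Type*} (m : Finset (Fin n)) (ρ : Matrix ι ι ℂ) (hρ : ρ.PosSemidef)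
    (At : (s : Fin n) → α s → Matrix ι ι ℂ)
    (hsym : ∀ s i, (At s i)ᵀ = At s i)
    (hreal : ∀ s i p q, ((At s i) p q).im = 0)
    (hcomm : ∀ s s', s ≠ s' → ∀ i j, At s i * At s' j = At s' j * At s i)
    (hppt : ∀ (w v : List (Σ s : Fin n, α s)),
      (∀ p ∈ w, p.1 ∈ m) → (∀ p ∈ v, p.1 ∉ m) →
      Matrix.trace (ρ * wordProd At w * wordProd At v) =
        Matrix.trace (ρ * wordProd At w.reverse * wordProd At v)) :
    ∃ τ : Matrix (Fin n → κ) (Fin n → κ) ℂ, τ.PosSemidef ∧ ptm m τ = τ ∧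
      ∀ l : (s : Fin n) → List (α s),
        Matrix.trace (τ * npTensor (fun s => Matrix.reindexAlgEquiv ℂ ℂ e (wrd At s (l s)))) =
          Matrix.trace (ρ * (List.ofFn (fun s => wrd At s (l s))).prod) := by
  have hH : ∀ s i, (At s i)ᴴ = At s i := fun s i => herm_of_real _ (hsym s i) (hreal s i)
  let R := Matrix.reindexAlgEquiv ℂ ℂ e
  let big : ((s : Fin n) → List (α s)) → Matrix (Fin n → κ) (Fin n → κ) ℂ :=
    fun l => npTensor (fun s => R (wrd At s (l s)))
  let pr : ((s : Fin n) → List (α s)) → Matrix ι ι ℂ :=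
    fun l => (List.ofFn (fun s => wrd At s (l s))).prod
  obtain ⟨Q, hQ⟩ := exists_tensor_lift (n := n) (fun _ => R.symm.toLinearMap)
  have hQb : ∀ l, Q (big l) = pr l := by
    intro l
    simp only [big, pr, hQ]
    simp
  have hbmul : ∀ l l', big l * big l' = big (fun s => l s ++ l' s) := by
    intro l l'
    simp only [big, npTensor_mul, wrd_append, map_mul]
  have hbstar : ∀ l, (big l)ᴴ = big (fun s => (l s).reverse) := by
    intro l
    simp only [big, npTensor_star, ← wrd_star At hH]
    rfl
  have hbpt : ∀ l, ptm m (big l) = big (fun s => if s ∈ m then (l s).reverse else l s) := by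
    intro l
    simp only [big, ptm_npTensor]
    congr 1
    ext1 s
    split_ifs
    · rw [← wrd_transpose At hsym]; rfl
    · rfl
  have hpmul : ∀ l l', pr l * pr l' = pr (fun s => l s ++ l' s) := by
    intro l l'
    simp only [pr, wrd_append]
    rw [ofFn_prod_mul _ _ (fun i j hij => wrd_comm At hcomm i j hij _ _)]
  have hpstar : ∀ l, (pr l)ᴴ = pr (fun s => (l s).reverse) := by
    intro l
    have hpt : (pr l)ᵀ = pr (fun s => (l s).reverse) := by
      simp only [pr, ← wrd_transpose At hsym]
      exact ofFn_prod_transpose _ (fun i j hij => wrd_comm At hcomm i j hij _ _)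
    rw [← hpt]
    have hw : pr l = wordProd At _ := (wordProd_flat At l).symm
    rw [hw, ← wordProd_transpose At hsym]
    generalize (List.ofFn fun s => (l s).map (fun i => (⟨s, i⟩ : Σ s : Fin n, α s))).flatten = w
    simp [wordProd, Matrix.conjTranspose_list_prod, Function.comp_def, hH, List.map_reverse]
  let S0 : Submodule ℂ (Matrix (Fin n → κ) (Fin n → κ) ℂ) := Submodule.span ℂ (Set.range big)
  have hb : ∀ l, big l ∈ S0 := fun l => Submodule.subset_span ⟨l, rfl⟩
  have h1 : (1 : Matrix (Fin n → κ) (Fin n → κ) ℂ) ∈ S0 := by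
    have := hb (fun _ => [])
    simpa [big, wrd, npTensor_one] using this
  have hmul' : ∀ x ∈ S0, ∀ y ∈ S0, x * y ∈ S0 ∧ Q (x * y) = Q x * Q y := by
    intro x hx
    induction hx using Submodule.span_induction with
    | mem x hx =>
      obtain ⟨l, rfl⟩ := hx
      intro y hy
      induction hy using Submodule.span_induction with
      | mem y hy =>
        obtain ⟨l', rfl⟩ := hy
        rw [hbmul, hQb, hQb, hQb, hpmul]
        exact ⟨hb _, rfl⟩
      | zero => simp
      | add y z _ _ h2 h3 =>
        rw [mul_add]
        exact ⟨S0.add_mem h2.1 h3.1, by rw [map_add, h2.2, h3.2, map_add, mul_add]⟩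
      | smul c y _ h2 =>
        rw [mul_smul_comm]
        exact ⟨S0.smul_mem _ h2.1, by rw [map_smul, h2.2, map_smul, mul_smul_comm]⟩
    | zero => intro y hy; simp
    | add x z _ _ h2 h3 =>
      intro y hy
      rw [add_mul]
      exact ⟨S0.add_mem (h2 y hy).1 (h3 y hy).1,
        by rw [map_add, (h2 y hy).2, (h3 y hy).2, map_add, add_mul]⟩
    | smul c x _ h2 =>
      intro y hy
      rw [smul_mul_assoc]
      exact ⟨S0.smul_mem _ (h2 y hy).1, by rw [map_smul, (h2 y hy).2, map_smul, smul_mul_assoc]⟩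
  have hstar' : ∀ x ∈ S0, xᴴ ∈ S0 ∧ Q xᴴ = (Q x)ᴴ := by
    intro x hx
    induction hx using Submodule.span_induction with
    | mem x hx =>
      obtain ⟨l, rfl⟩ := hx
      rw [hbstar, hQb, hQb, hpstar]
      exact ⟨hb _, rfl⟩
    | zero => simp
    | add x z _ _ h2 h3 =>
      rw [conjTranspose_add]
      exact ⟨S0.add_mem h2.1 h3.1, by rw [map_add, h2.2, h3.2, map_add, conjTranspose_add]⟩
    | smul c x _ h2 =>
      rw [conjTranspose_smul]
      exact ⟨S0.smul_mem _ h2.1, by rw [map_smul, h2.2, map_smul, conjTranspose_smul]⟩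
  let φ : Matrix (Fin n → κ) (Fin n → κ) ℂ →ₗ[ℂ] ℂ :=
    Matrix.traceLinearMap ι ℂ ℂ ∘ₗ LinearMap.mulLeft ℂ ρ ∘ₗ Q
  have hφ : ∀ x, φ x = Matrix.trace (ρ * Q x) := fun x => rfl
  have hpt' : ∀ x ∈ S0, ptmL m x ∈ S0 ∧ φ (ptmL m x) = φ x := by
    intro x hx
    induction hx using Submodule.span_induction with
    | mem x hx =>
      obtain ⟨l, rfl⟩ := hx
      have : ptmL m (big l) = ptm m (big l) := rfl
      rw [this, hbpt, hφ, hφ, hQb, hQb]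
      exact ⟨hb _, ppt_words m ρ At hsym hcomm hppt l⟩
    | zero => simp
    | add x z _ _ h2 h3 =>
      rw [map_add]
      exact ⟨S0.add_mem h2.1 h3.1, by rw [map_add, h2.2, h3.2, map_add]⟩
    | smul c x _ h2 =>
      rw [map_smul]
      exact ⟨S0.smul_mem _ h2.1, by rw [map_smul, h2.2, map_smul]⟩
  have hstar : ∀ x ∈ S0, xᴴ ∈ S0 := fun x hx => (hstar' x hx).1
  obtain ⟨τ, hτS, hτ⟩ := riesz_in_sub S0 hstar φ
  have hherm : τᴴ = τ := by
    refine uniq_in_sub S0 hstar _ _ (hstar _ hτS) hτS fun y hy => ?_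
    have e1 : Matrix.trace (τᴴ * y) = star (Matrix.trace (τ * yᴴ)) := by
      rw [← Matrix.trace_conjTranspose, conjTranspose_mul, conjTranspose_conjTranspose,
        Matrix.trace_mul_comm]
    rw [e1, hτ _ (hstar y hy), hτ _ hy, hφ, hφ, (hstar' y hy).2, ← Matrix.trace_conjTranspose,
      conjTranspose_mul, conjTranspose_conjTranspose, hρ.1.eq, Matrix.trace_mul_comm]
  refine ⟨τ, ?_, ?_, ?_⟩
  · refine psd_of_alg (S0.toSubalgebra h1 (fun x y hx hy => (hmul' x hx y hy).1)) τ hτS hherm ?_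
    intro y hy
    have hy : y ∈ S0 := hy
    rw [hτ _ (hmul' _ (hstar y hy) _ hy).1, hφ, (hmul' _ (hstar y hy) _ hy).2, (hstar' y hy).2,
      ← mul_assoc, Matrix.trace_mul_comm, ← mul_assoc]
    exact (hρ.mul_mul_conjTranspose_same (Q y)).trace_nonneg
  · refine uniq_in_sub S0 hstar _ _ (hpt' τ hτS).1 hτS fun y hy => ?_
    rw [trace_ptm_mul, hτ _ hy]
    exact (hτ _ (hpt' y hy).1).trans (hpt' y hy).2
  · intro l
    have := hτ _ (hb l)
    rw [hφ, hQb] at this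
    exact this

/-- Proposition 3, converse direction, finite dimensions: a commutative
PPT mixture quantum representation in finite dimensions yields a tensor-product PPT
mixture quantum representation reproducing the same expectation values. -/
theorem commutative_PPT_mixture_gives_tensorProduct_PPT_mixture
    {n : ℕ} (hn : 2 ≤ n) {ι : Type*} [Fintype ι] [Nonempty ι] [DecidableEq ι]
    {α : Fin n → Type*}
    (M : Finset (Finset (Fin n))) (hM : ∀ m ∈ M, m.Nonempty ∧ m ≠ Finset.univ)
    (ρm : Finset (Fin n) → Matrix ι ι ℂ)
    (hρm : ∀ m ∈ M, (ρm m).PosSemidef)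
    (hρreal : ∀ m ∈ M, ∀ p q, ((ρm m) p q).im = 0)
    (htr : ∑ m ∈ M, Matrix.trace (ρm m) = 1)
    (At : (s : Fin n) → α s → Matrix ι ι ℂ)
    (hsym : ∀ s i, (At s i)ᵀ = At s i)
    (hreal : ∀ s i p q, ((At s i) p q).im = 0)
    (hidem : ∀ s i, At s i * At s i = At s i)
    (hcomm : ∀ s s', s ≠ s' → ∀ i j, At s i * At s' j = At s' j * At s i)
    (hppt : ∀ m ∈ M, ∀ (w v : List (Σ s : Fin n, α s)),
      (∀ p ∈ w, p.1 ∈ m) → (∀ p ∈ v, p.1 ∉ m) →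
      Matrix.trace (ρm m * wordProd At w * wordProd At v) =
        Matrix.trace (ρm m * wordProd At w.reverse * wordProd At v)) :
    ∃ (d : Fin n → ℕ), (∀ s, 0 < d s) ∧
    ∃ (ρ : Matrix ((s : Fin n) → Fin (d s)) ((s : Fin n) → Fin (d s)) ℂ)
      (τ : Finset (Fin n) → Matrix ((s : Fin n) → Fin (d s)) ((s : Fin n) → Fin (d s)) ℂ)
      (A : (s : Fin n) → α s → Matrix (Fin (d s)) (Fin (d s)) ℂ),
      ρ.PosSemidef ∧ Matrix.trace ρ = 1 ∧
      ρ = ∑ m ∈ M, τ m ∧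
      (∀ m ∈ M, (τ m).PosSemidef ∧ (ptm m (τ m)).PosSemidef) ∧
      (∀ s i, (A s i).IsHermitian ∧ A s i * A s i = A s i) ∧
      (∀ i : (s : Fin n) → α s,
        Matrix.trace (ρ * npTensor (fun s => A s (i s))) =
          Matrix.trace ((∑ m ∈ M, ρm m) * (List.ofFn (fun s => At s (i s))).prod)) := by
  classical
  let e := Fintype.equivFin ι
  choose! τ hτ using fun m hm => core e m (ρm m) (hρm m hm) At hsym hreal hcomm (hppt m hm)
  refine ⟨fun _ => Fintype.card ι, fun _ => Fintype.card_pos, ∑ m ∈ M, τ m, τ,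
    fun s i => Matrix.reindexAlgEquiv ℂ ℂ e (At s i), ?_, ?_, rfl, ?_, ?_, ?_⟩
  · exact Matrix.posSemidef_sum _ fun m hm => (hτ m hm).1
  · rw [Matrix.trace_sum, ← htr]
    refine Finset.sum_congr rfl fun m hm => ?_
    have := (hτ m hm).2.2 (fun _ => [])
    simpa [wrd, npTensor_one] using this
  · intro m hm
    exact ⟨(hτ m hm).1, by rw [(hτ m hm).2.1]; exact (hτ m hm).1⟩
  · intro s i
    refine ⟨?_, by rw [← map_mul, hidem]⟩
    rw [Matrix.IsHermitian]
    beta_reduce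
    conv_rhs => rw [← herm_of_real (At s i) (hsym s i) (hreal s i)]
    rfl
  · intro i
    rw [Finset.sum_mul, Finset.sum_mul, Matrix.trace_sum, Matrix.trace_sum]
    refine Finset.sum_congr rfl fun m hm => ?_
    have := (hτ m hm).2.2 (fun s => [i s])
    simpa [wrd] using this
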